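/- Let π be a Gaussian prime with π·π̄ = p, where p ≡ 1 (mod 4) is a rational prime with p ≥ 13, and let n ≥ 1 and 1 ≤ k ≤ n. If C is an additive subgroup of G_π^n of cardinality p^k (an (n,k) linear code) that corrects all errors of Mannheim weight 2 or less, then p^{n−k} ≥ 8n² + 1. -/

import Mathlib

/-- The Mannheim weight of a residue class `x ∈ G_π = ℤ[i]/(π)`: the least value
of `|a| + |b|` over all Gaussian integers `a + bi` in the class `x`. -/
noncomputable def mWt (π : GaussianInt) (x : GaussianInt ⧸ Ideal.span {π}) : ℕ :=
  sInf {m | ∃ a b : ℤ, Ideal.Quotient.mk (Ideal.span {π}) ⟨a, b⟩ = x ∧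
    m = a.natAbs + b.natAbs}

/-- The Mannheim weight of a vector over `G_π` is the sum of the Mannheim
weights of its components. -/
noncomputable def mWtVec (π : GaussianInt) {n : ℕ}
    (v : Fin n → GaussianInt ⧸ Ideal.span {π}) : ℕ :=
  ∑ i, mWt π (v i)

/-- A code `C ⊆ G_π^n` corrects all errors of Mannheim weight `t` or less:
any two distinct vectors of Mannheim weight at most `t` lie in distinct cosets of `C`. -/
def CorrectsM (π : GaussianInt) {n : ℕ}
    (C : AddSubgroup (Fin n → GaussianInt ⧸ Ideal.span {π})) (t : ℕ) : Prop :=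
  ∀ u v : Fin n → GaussianInt ⧸ Ideal.span {π},
    mWtVec π u ≤ t → mWtVec π v ≤ t → u - v ∈ C → u = v


/-- `2 m^2 + 1` explicit points in the l1-ball of radius 2 in `ι → ℤ`. -/
def ballPt {ι : Type} [DecidableEq ι] (r : ι → ℕ) : Option (ι × ι × Bool) → ι → ℤ
  | none => fun _ => 0
  | some (a, b, s) => fun c =>
      (if s then 1 else -1) * ((if c = a then 1 else 0) +
        (if r a ≤ r b then 1 else -1) * (if c = b then 1 else 0))

lemma ballPt_injective {ι : Type} [DecidableEq ι] (r : ι → ℕ) (hr : Function.Injective r) :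
    Function.Injective (ballPt r) := by
  intro x y h
  have key : ∀ (a b : ι) (s : Bool), ballPt r (some (a, b, s)) ≠ ballPt r none := by
    intro a b s h
    have h1 := congrFun h a
    simp only [ballPt] at h1
    have := @hr a b
    grind
  rcases x with _ | ⟨a, b, s⟩ <;> rcases y with _ | ⟨a', b', s'⟩
  · rfl
  · exact absurd h.symm (key _ _ _)
  · exact absurd h (key _ _ _)
  · have h1 := congrFun h a
    have h2 := congrFun h b
    have h3 := congrFun h a'
    have h4 := congrFun h b'
    simp only [ballPt] at h1 h2 h3 h4
    have := @hr a b
    have := @hr a' b'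
    have : a = a' ∧ b = b' ∧ s = s' := by
      cases s <;> cases s' <;> grind
    simp [this]

lemma ballPt_weight {ι : Type} [DecidableEq ι] [Fintype ι] (r : ι → ℕ)
    (x : Option (ι × ι × Bool)) : ∑ c, (ballPt r x c).natAbs ≤ 2 := by
  rcases x with _ | ⟨a, b, s⟩
  · simp [ballPt]
  · calc _ ≤ ∑ c, ((if c = a then 1 else 0) + (if c = b then 1 else 0)) := by
          apply Finset.sum_le_sum
          intro c _
          simp only [ballPt]
          split_ifs <;> simp
      _ = 2 := by simp [Finset.sum_add_distrib]

lemma mannheim_card (π : GaussianInt) (p : ℕ) (hp : p.Prime)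
    (hnorm : Zsqrtd.norm π = (p : ℤ)) :
    Finite (GaussianInt ⧸ Ideal.span {π}) ∧ Nat.card (GaussianInt ⧸ Ideal.span {π}) ≤ p := by
  obtain ⟨a, b⟩ := π
  have hab : a * a + b * b = p := by
    simpa [Zsqrtd.norm_def] using hnorm
  have hpz : Prime (p : ℤ) := Nat.prime_iff_prime_int.mp hp
  have hcop : IsCoprime b (p : ℤ) := by
    refine ((Prime.coprime_iff_not_dvd hpz).2 fun hb => ?_).symm
    have h1 : (p : ℤ) ∣ a * a := by
      have : a * a = p - b * b := by linarith
      rw [this]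
      exact dvd_sub dvd_rfl (hb.mul_right _)
    have ha : (p : ℤ) ∣ a := by
      rcases hpz.dvd_or_dvd h1 with h | h <;> exact h
    have h2 : (p : ℤ) * p ∣ p * 1 := by
      rw [mul_one]
      nth_rewrite 3 [← hab]
      exact dvd_add (mul_dvd_mul ha ha) (mul_dvd_mul hb hb)
    exact hpz.not_isUnit (isUnit_of_dvd_one ((mul_dvd_mul_iff_left hpz.ne_zero).1 h2))
  obtain ⟨u, v, huv⟩ := hcop
  have hp0 : (0 : ℤ) < p := by exact_mod_cast hp.pos
  let f : Fin p → GaussianInt ⧸ Ideal.span {(⟨a, b⟩ : GaussianInt)} :=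
    fun j => Ideal.Quotient.mk _ ⟨(j : ℕ), 0⟩
  have hf : Function.Surjective f := by
    intro x
    obtain ⟨⟨c, d⟩, rfl⟩ := Ideal.Quotient.mk_surjective x
    have hr0 := Int.emod_nonneg (c - d * a * u) hp0.ne'
    have hr1 := Int.emod_lt_of_pos (c - d * a * u) hp0
    have hr2 := Int.emod_add_mul_ediv (c - d * a * u) p
    set R := (c - d * a * u) % (p : ℤ) with hR
    set q := (c - d * a * u) / (p : ℤ)
    refine ⟨⟨R.toNat, by omega⟩, ?_⟩
    have hRR : ((R.toNat : ℕ) : ℤ) = R := Int.toNat_of_nonneg hr0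
    change Ideal.Quotient.mk _ _ = _
    rw [eq_comm, Ideal.Quotient.eq, Ideal.mem_span_singleton]
    refine ⟨⟨d * (u + v * b) + q * a, d * (v * a) - q * b⟩, ?_⟩
    ext
    · simp only [Zsqrtd.re_sub, Zsqrtd.re_mul, hRR]
      rw [← hab] at hr2
      linear_combination - hr2
    · simp only [Zsqrtd.im_sub, Zsqrtd.im_mul]
      rw [← hab] at huv
      linear_combination - d * huv
  refine ⟨Finite.of_surjective f hf, ?_⟩
  simpa using Nat.card_le_card_of_surjective f hf

lemma small_eq (π : GaussianInt) (p : ℕ) (hp4 : p % 4 = 1) (hp13 : 13 ≤ p)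
    (hnorm : Zsqrtd.norm π = (p : ℤ)) (x y x' y' : ℤ)
    (h1 : x.natAbs + y.natAbs ≤ 2) (h2 : x'.natAbs + y'.natAbs ≤ 2)
    (h : Ideal.Quotient.mk (Ideal.span {π}) ⟨x, y⟩ = Ideal.Quotient.mk (Ideal.span {π}) ⟨x', y'⟩) :
    x = x' ∧ y = y' := by
  rw [Ideal.Quotient.eq, Ideal.mem_span_singleton] at h
  obtain ⟨z, hz⟩ := h
  have hN := congrArg Zsqrtd.norm hz
  rw [Zsqrtd.norm_mul, hnorm] at hN
  simp only [Zsqrtd.norm_def, Zsqrtd.re_sub, Zsqrtd.im_sub] at hN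
  generalize z.re * z.re - -1 * z.im * z.im = w at hN
  obtain ⟨X, hX⟩ : ∃ X, X = x - x' := ⟨_, rfl⟩
  obtain ⟨Y, hY⟩ : ∃ Y, Y = y - y' := ⟨_, rfl⟩
  rw [← hX, ← hY] at hN
  have hXY : X.natAbs + Y.natAbs ≤ 4 := by omega
  have hXa : -4 ≤ X := by omega
  have hXb : X ≤ 4 := by omega
  have hYa : -4 ≤ Y := by omega
  have hYb : Y ≤ 4 := by omega
  suffices X = 0 ∧ Y = 0 by omega
  by_contra hne
  have hp' : (13 : ℤ) ≤ p := by exact_mod_cast hp13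
  have hval : X * X - -1 * Y * Y = 16 ∨ (0 < X * X - -1 * Y * Y ∧ X * X - -1 * Y * Y < 13) := by
    clear hX hY hN hz
    interval_cases X <;> interval_cases Y <;> simp_all
  rw [hN] at hval
  have hw : 0 < w := by
    rcases hval with h | h <;> nlinarith
  rcases hval with h | h
  · have hw1 : w < 2 := by nlinarith
    have hw2 : w = 1 := by omega
    subst hw2
    omega
  · nlinarith

/-- An `(n, k)` linear code over `G_π` (`π` a Gaussian prime with `π·π̄ = p`,
`p ≡ 1 (mod 4)` a rational prime with `p ≥ 13`) correcting all errors of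
Mannheim weight 2 or less satisfies `p^(n-k) ≥ 8n² + 1`. -/
theorem sphere_packing_mannheim_wt_two (π : GaussianInt) (hπ : Prime π)
    (p : ℕ) (hp : p.Prime) (hp4 : p % 4 = 1) (hp13 : 13 ≤ p)
    (hnorm : Zsqrtd.norm π = (p : ℤ))
    (n k : ℕ) (hn : 1 ≤ n) (hk : 1 ≤ k) (hkn : k ≤ n)
    (C : AddSubgroup (Fin n → GaussianInt ⧸ Ideal.span {π}))
    (hcard : Nat.card C = p ^ k)
    (hcorr : CorrectsM π C 2) :
    8 * n ^ 2 + 1 ≤ p ^ (n - k) := by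
  classical
  obtain ⟨hfin, hle⟩ := mannheim_card π p hp hnorm
  let r : Fin n × Bool → ℕ := fun x => Fintype.equivFin (Fin n × Bool) x
  have hr : Function.Injective r :=
    Fin.val_injective.comp (Fintype.equivFin (Fin n × Bool)).injective
  let Φ : Option ((Fin n × Bool) × (Fin n × Bool) × Bool) → Fin n → GaussianInt ⧸ Ideal.span {π} :=
    fun x i => Ideal.Quotient.mk _ ⟨ballPt r x (i, false), ballPt r x (i, true)⟩
  have hsum : ∀ x, ∑ i, ((ballPt r x (i, false)).natAbs + (ballPt r x (i, true)).natAbs) ≤ 2 := by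
    intro x
    have := ballPt_weight r x
    rw [Fintype.sum_prod_type] at this
    simpa [add_comm] using this
  have hΦ : Function.Injective Φ := by
    intro x y hxy
    apply ballPt_injective r hr
    have : ∀ i, ballPt r x (i, false) = ballPt r y (i, false) ∧
        ballPt r x (i, true) = ballPt r y (i, true) := by
      intro i
      refine small_eq π p hp4 hp13 hnorm _ _ _ _ ?_ ?_ (congrFun hxy i)
      · exact (Finset.single_le_sum (f := fun i => (ballPt r x (i, false)).natAbs +
          (ballPt r x (i, true)).natAbs) (fun _ _ => Nat.zero_le _) (Finset.mem_univ i)).trans (hsum x)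
      · exact (Finset.single_le_sum (f := fun i => (ballPt r y (i, false)).natAbs +
          (ballPt r y (i, true)).natAbs) (fun _ _ => Nat.zero_le _) (Finset.mem_univ i)).trans (hsum y)
    funext ⟨i, s⟩
    cases s
    · exact (this i).1
    · exact (this i).2
  have hwt : ∀ x, mWtVec π (Φ x) ≤ 2 := by
    intro x
    refine le_trans (Finset.sum_le_sum fun i _ => ?_) (hsum x)
    exact Nat.sInf_le ⟨_, _, rfl, rfl⟩
  have hQ : Function.Injective fun x => (QuotientAddGroup.mk (Φ x) :
      (Fin n → GaussianInt ⧸ Ideal.span {π}) ⧸ C) := by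
    intro x y hxy
    apply hΦ
    symm
    refine hcorr _ _ (hwt y) (hwt x) ?_
    have := QuotientAddGroup.eq.1 hxy
    rwa [neg_add_eq_sub] at this
  have hc := Nat.card_le_card_of_injective _ hQ
  have hc2 := C.card_eq_card_quotient_mul_card_addSubgroup
  rw [hcard, Nat.card_fun, Nat.card_fin] at hc2
  have hc3 := Nat.pow_le_pow_left hle n
  have hpk : 0 < p ^ k := pow_pos hp.pos k
  have hc4 : Nat.card ((Fin n → GaussianInt ⧸ Ideal.span {π}) ⧸ C) ≤ p ^ (n - k) := by
    refine Nat.le_of_mul_le_mul_right ?_ hpk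
    rw [← hc2, ← pow_add, Nat.sub_add_cancel hkn]
    exact hc3
  refine le_trans (le_of_eq ?_) (hc.trans hc4)
  simp [Nat.card_eq_fintype_card]
  ring
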